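/- arXiv:2303.16481 — 3 statements merged into one kernel-verified Lean document; each statement's English description precedes it below -/
import Mathlib

section
/- Let X be an involutive BE algebra. Then for all x, y ∈ X: (1) x ≤_Q y implies x = y∧x and y = x∨y; (2) the relation ≤_Q is reflexive and antisymmetric; (3) x∨y = (x*∧y*)*; (4) x ≤_Q y implies x ≤ y; (5) 0 ≤_Q x and x ≤_Q 1; (6) 0∧x = 0, x∧0 = 0, 1∧x = x and x∧1 = x; (7) x∧(y∧x) = y∧x and x∧(x∧y) = x∧y. -/
/-!
By exchange and involution, `x* → y* = y → x`, so `x ∧ y = ((y → x) → y*)*`. Hence `z ≤ x` already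
forces `x ∧ z = z` (`inf_eq_of_le`). Since moreover `x ∧ y` lies below both `x` and `y`
(`inf_le_left`, `inf_le_right`), every item follows from these three facts, from double negation,
or from direct evaluation at `0` and `1`.
-/

/-- A bounded involutive BE algebra. -/
class InvBE (X : Type*) where
  imp : X → X → X
  one : X
  zero : X
  be1 : ∀ x : X, imp x x = one
  be2 : ∀ x : X, imp x one = one
  be3 : ∀ x : X, imp one x = x
  be4 : ∀ x y z : X, imp x (imp y z) = imp y (imp x z)
  bound : ∀ x : X, imp zero x = one
  dn : ∀ x : X, imp (imp x zero) zero = x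

namespace InvBE

variable {X : Type*} [InvBE X]

/-- Negation: `x* = x → 0`. -/
def neg (x : X) : X := imp x zero

/-- `x ∨ y = (x → y) → y`. -/
def sup (x y : X) : X := imp (imp x y) y

/-- `x ∧ y = ((x* → y*) → y*)*`. -/
def inf (x y : X) : X := neg (imp (imp (neg x) (neg y)) (neg y))

/-- `x ≤ y` iff `x → y = 1`. -/
def le (x y : X) : Prop := imp x y = one

/-- `x ≤_Q y` iff `x = x ∧ y`. -/
def leQ (x y : X) : Prop := x = inf x y

end InvBE

namespace InvBE

variable {X : Type*} [InvBE X]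

theorem neg_neg (x : X) : neg (neg x) = x := dn x

theorem neg_one : neg (one : X) = zero := be3 zero

theorem neg_imp_neg (x y : X) : imp (neg x) (neg y) = imp y x := by
  unfold neg
  rw [be4, dn]

theorem inf_eq (x y : X) : inf x y = neg (imp (imp y x) (neg y)) := by
  unfold inf
  rw [neg_imp_neg]

theorem inf_eq_of_le {x z : X} (h : le z x) : inf x z = z := by
  rw [inf_eq, show imp z x = one from h, be3, neg_neg]

theorem inf_le_right (x y : X) : le (inf x y) y := by
  unfold le
  rw [← neg_imp_neg, inf_eq, neg_neg, be4, be1, be2]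

/-- By contraposition and exchange, `x ∧ y → x` becomes `(y → x) → (y → x)`. -/
theorem inf_le_left (x y : X) : le (inf x y) x := by
  have h : imp (imp y x) (neg y) = imp y (neg (imp y x)) := be4 _ _ _
  unfold le
  rw [← neg_imp_neg, inf_eq, neg_neg, h, be4, neg_imp_neg, be4, be1]

theorem le_of_leQ {x y : X} (h : leQ x y) : le x y := by
  have h' := inf_le_right x y
  rwa [← show x = inf x y from h] at h'

theorem inf_one (x : X) : inf x one = x := by
  rw [inf_eq, be3, neg_one]
  exact dn x

theorem zero_inf (x : X) : inf zero x = zero := by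
  rw [inf_eq, show imp x zero = neg x from rfl, be1, neg_one]

end InvBE

open InvBE in
theorem stmt_0 {X : Type*} [InvBE X] :
    (∀ x y : X, leQ x y → x = inf y x ∧ y = sup x y) ∧
    (∀ x : X, leQ x x) ∧
    (∀ x y : X, leQ x y → leQ y x → x = y) ∧
    (∀ x y : X, sup x y = neg (inf (neg x) (neg y))) ∧
    (∀ x y : X, leQ x y → le x y) ∧
    (∀ x : X, leQ (zero : X) x ∧ leQ x (one : X)) ∧
    (∀ x : X, inf (zero : X) x = zero ∧ inf x (zero : X) = zero ∧
      inf (one : X) x = x ∧ inf x (one : X) = x) ∧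
    (∀ x y : X, inf x (inf y x) = inf y x ∧ inf x (inf x y) = inf x y) := by
  refine ⟨fun x y h => ⟨(inf_eq_of_le (le_of_leQ h)).symm, ?_⟩,
    fun x => (inf_eq_of_le (be1 x)).symm,
    fun x y hxy hyx => (inf_eq_of_le (le_of_leQ hxy)).symm.trans (Eq.symm hyx),
    fun x y => ?_, fun x y => le_of_leQ,
    fun x => ⟨(zero_inf x).symm, (inf_one x).symm⟩,
    fun x => ⟨zero_inf x, inf_eq_of_le (bound x), inf_eq_of_le (be2 x), inf_one x⟩,
    fun x y => ⟨inf_eq_of_le (inf_le_right y x), inf_eq_of_le (inf_le_left x y)⟩⟩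
  · unfold sup
    rw [show imp x y = one from le_of_leQ h, be3]
  · unfold inf sup
    simp only [InvBE.neg_neg]
end

section
/- Let (X, →, *, 1) be a Wajsberg algebra. Then x→(y∧z) = (x→y)∧(x→z) for all x, y, z ∈ X. -/
/-!
The relation `imp x y = one` is a partial order in which `sup` is the join. The negation `neg x`
equals `imp x zero`, so it is an order-reversing involution and `inf` is the meet.
The contraposition law `imp (neg x) (neg y) = imp y x` together with the exchange law gives the
residuation identity `imp w (imp x y) = imp (neg (imp w (neg x))) y`: the map `imp x` is an upper
adjoint (`imp_imp_eq`). Upper adjoints preserve meets, which is the theorem.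
-/

/-- A Wajsberg algebra. -/
class Wajsberg (X : Type*) where
  imp : X → X → X
  neg : X → X
  one : X
  w1 : ∀ x : X, imp one x = x
  w2 : ∀ x y z : X, imp (imp y z) (imp (imp z x) (imp y x)) = one
  w3 : ∀ x y : X, imp (imp x y) y = imp (imp y x) x
  w4 : ∀ x y : X, imp (imp (neg x) (neg y)) (imp y x) = one

namespace Wajsberg

variable {X : Type*} [Wajsberg X]

/-- `0 = 1*`. -/
def zero : X := neg one

/-- `x ≤ y` iff `x → y = 1`. -/
def le (x y : X) : Prop := imp x y = one

/-- `x ∨ y = (x → y) → y`. -/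
def sup (x y : X) : X := imp (imp x y) y

/-- `x ∧ y = ((x* → y*) → y*)*`. -/
def inf (x y : X) : X := neg (imp (imp (neg x) (neg y)) (neg y))

/-- `x ≤_Q y` iff `x = x ∧ y`. -/
def leQ (x y : X) : Prop := x = inf x y

end Wajsberg

namespace Wajsberg

variable {X : Type*} [Wajsberg X]

theorem imp_self' (x : X) : imp x x = one := by
  simpa only [w1] using w2 x one one

theorem imp_antisymm {x y : X} (h : imp x y = one) (h' : imp y x = one) : x = y := by
  have := w3 x y
  rw [h, h', w1, w1] at this
  exact this.symm

theorem imp_one' (x : X) : imp x one = one := by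
  have h : imp (imp x one) one = one := by rw [w3, w1, imp_self']
  have := w2 one one x
  rwa [w1, w1, h] at this

theorem imp_trans {x y z : X} (h : imp x y = one) (h' : imp y z = one) : imp x z = one := by
  have := w2 z x y
  rwa [h, h', w1, w1] at this

theorem imp_weaken (x y : X) : imp y (imp x y) = one := by
  have := w2 y x one
  rwa [imp_one', w1, w1] at this

theorem imp_anti {y z : X} (h : imp y z = one) (x : X) : imp (imp z x) (imp y x) = one := by
  have := w2 x y z
  rwa [h, w1] at this

theorem imp_sup_left (x y : X) : imp x (imp (imp x y) y) = one := by
  rw [w3]; exact imp_weaken _ _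

theorem imp_exchange (x y z : X) : imp x (imp y z) = imp y (imp x z) := by
  have key : ∀ x y z : X, imp (imp x (imp y z)) (imp y (imp x z)) = one := fun x y z =>
    imp_trans (w2 z x (imp y z)) (imp_anti (imp_sup_left y z) _)
  exact imp_antisymm (key _ _ _) (key _ _ _)

theorem imp_mono {x y : X} (h : imp x y = one) (z : X) : imp (imp z x) (imp z y) = one := by
  have := w2 y z x
  rwa [h, w1] at this

theorem zero_imp (x : X) : imp zero x = one := by
  have := w4 x (one : X)
  rw [w1] at this
  exact imp_trans (imp_weaken (neg x) _) this

theorem imp_zero_imp_zero (x : X) : imp (imp x zero) zero = x := by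
  rw [w3, zero_imp, w1]

theorem neg_eq (x : X) : neg x = imp x zero := by
  have h1 : imp (neg x) (imp x zero) = one :=
    imp_trans (imp_weaken (neg zero) _) (w4 zero x)
  have h2 : imp (imp (neg x) zero) x = one := by
    have := w4 x (one : X)
    rwa [w1] at this
  have h3 := imp_anti h2 zero
  rw [imp_zero_imp_zero] at h3
  exact imp_antisymm h1 h3

theorem neg_neg' (x : X) : neg (neg x) = x := by
  rw [neg_eq, neg_eq, imp_zero_imp_zero]

theorem neg_imp_neg (x y : X) : imp (neg x) (neg y) = imp y x := by
  rw [neg_eq y, imp_exchange, ← neg_eq, neg_neg']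

theorem inf_imp_left (x y : X) : imp (inf x y) x = one := by
  rw [← neg_imp_neg, inf, neg_neg']; exact imp_sup_left _ _

theorem inf_imp_right (x y : X) : imp (inf x y) y = one := by
  rw [← neg_imp_neg, inf, neg_neg']; exact imp_weaken _ _

theorem sup_imp {x y z : X} (hx : imp x z = one) (hy : imp y z = one) :
    imp (imp (imp x y) y) z = one := by
  -- `sup` is monotone in its first argument, and `sup z y = sup y z = z` when `y ≤ z`.
  have h := imp_anti (imp_anti hx y) y
  rwa [w3 z y, hy, w1] at h

theorem imp_inf {w x y : X} (hx : imp w x = one) (hy : imp w y = one) :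
    imp w (inf x y) = one := by
  rw [← neg_imp_neg, inf, neg_neg']
  exact sup_imp (by rwa [neg_imp_neg]) (by rwa [neg_imp_neg])

/-- Residuation: `neg (imp w (neg x))` is the product of `w` and `x`, and `imp x` is the upper
adjoint of multiplication by `x`. -/
theorem imp_imp_eq (w x y : X) : imp w (imp x y) = imp (neg (imp w (neg x))) y := by
  rw [← neg_imp_neg y x, imp_exchange, ← neg_imp_neg y (neg _), neg_neg']

end Wajsberg

open Wajsberg in
theorem stmt_14 {X : Type*} [Wajsberg X] :
    ∀ x y z : X, imp x (inf y z) = inf (imp x y) (imp x z) := by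
  intro x y z
  apply imp_antisymm
  · exact imp_inf (imp_mono (inf_imp_left y z) x) (imp_mono (inf_imp_right y z) x)
  · rw [imp_imp_eq]
    apply imp_inf
    · rw [← imp_imp_eq]; exact inf_imp_left _ _
    · rw [← imp_imp_eq]; exact inf_imp_right _ _
end

section
/- If (X, →, *, 1) is a Wajsberg algebra, then (X, ≤, →, →) is a unital commutative quantum-B algebra with unit 1: the relation ≤ (x ≤ y iff x→y = 1) is a partial order on X, and for all x, y, z ∈ X: (QB1) y→z ≤ (x→y)→(x→z); (QB3) y ≤ z implies x→y ≤ x→z; (QB4) x ≤ y→z iff y ≤ x→z; and 1→x = x. -/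
namespace Wajsberg

variable {X : Type*} [Wajsberg X]

theorem le_refl' (x : X) : le x x := by
  have h := w2 x (one : X) one
  simp only [w1] at h
  exact h

theorem le_antisymm' {x y : X} (hxy : le x y) (hyx : le y x) : x = y := by
  have h := w3 x y
  rw [show imp x y = one from hxy, show imp y x = one from hyx, w1, w1] at h
  exact h.symm

theorem imp_antitone {y z : X} (x : X) (h : le y z) : le (imp z x) (imp y x) := by
  have h2 := w2 x y z
  rwa [show imp y z = one from h, w1] at h2

theorem le_trans' {x y z : X} (hxy : le x y) (hyz : le y z) : le x z := by
  have h : imp (imp y z) (imp x z) = one := imp_antitone z hxy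
  rwa [show imp y z = one from hyz, w1] at h

theorem le_imp_imp (z x : X) : le z (imp (imp z x) x) := by
  have h := w2 x one z
  rwa [w1, w1] at h

theorem exchange {x y z : X} (h : le x (imp y z)) : le y (imp x z) :=
  le_trans' (le_imp_imp y z) (imp_antitone z h)

theorem imp_le_imp_imp (x y z : X) : le (imp y z) (imp (imp x y) (imp x z)) :=
  exchange (w2 z x y)

end Wajsberg

open Wajsberg in
theorem stmt_17 {X : Type*} [Wajsberg X] :
    (∀ x : X, le x x) ∧
    (∀ x y : X, le x y → le y x → x = y) ∧
    (∀ x y z : X, le x y → le y z → le x z) ∧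
    (∀ x y z : X, le (imp y z) (imp (imp x y) (imp x z))) ∧
    (∀ x y z : X, le y z → le (imp x y) (imp x z)) ∧
    (∀ x y z : X, le x (imp y z) ↔ le y (imp x z)) ∧
    (∀ x : X, imp one x = x) := by
  refine ⟨le_refl', fun _ _ => le_antisymm', fun _ _ _ => le_trans', imp_le_imp_imp, ?_,
    fun _ _ _ => ⟨exchange, exchange⟩, w1⟩
  intro x y z h
  have h1 := imp_le_imp_imp x y z
  rw [show imp y z = one from h] at h1
  exact (w1 _).symm.trans h1
end
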